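/- One has V̂₀(τ) = 1 for all τ ∈ ℍ, and for every integer n ≥ 1 the lowering operator satisfies L(V̂_{2n})(τ) = −(3π/2) V̂_{2n−2}(τ), where V̂_{2n}(τ) := ∑_{0≤j≤n} (−1)^{n+j} 3^j π^{2n−j} V_{2n−2j}(q) / ((2v)^j j! (2n−2j)!). -/

import Mathlib

/-!
On the upper half-plane the functions `τ ↦ V_{2n}(q)` are holomorphic, so the lowering operator only
sees the powers of `v = Im τ`, on which it acts as `v² d/dv`. Thus `L` sends `v^{-j}` to
`-j v^{1-j}`: the term `j = 0` of `V̂_{2n}` dies, and the term `j = k + 1` becomes `-(3π/2)` times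
the term `k` of `V̂_{2n-2}`, because `(k+1)/(k+1)! = 1/k!`.

Holomorphy has two ingredients. The numerator series is locally uniformly dominated
(`summable_majorant`) thanks to `(6j+1)² = 24p + 1` with `p = j(3j+1)/2`. The denominator does not
vanish (`tsum_pentagonal_ne_zero`) because by Euler's pentagonal number theorem
(`tsum_pentagonal_eq_tprod`) it is the product `∏ (1 - qⁿ)`, which converges absolutely and has
nonzero factors. Mathlib proves Euler's theorem in a topological ring conditionally on convergence;
the convergence for complex `|q| < 1` follows from a uniform bound on the partial products
(`norm_euler_prod_le`). Nonvanishing of the denominator also gives `V̂₀ = V₀ = 1`.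
-/

open Complex Filter
open scoped Real

noncomputable section

/-- `q = e^{2πiτ}`. -/
def qq (τ : ℂ) : ℂ := Complex.exp (2 * (π : ℂ) * Complex.I * τ)

/-- The lowering operator `L = -2iv² ∂/∂τ̄`, where `∂/∂τ̄ = (1/2)(∂/∂u + i ∂/∂v)`. -/
def lowerOp (f : ℂ → ℂ) (τ : ℂ) : ℂ :=
  -2 * Complex.I * (τ.im : ℂ) ^ 2 *
    ((1 / 2 : ℂ) * (fderiv ℝ f τ 1 + Complex.I * fderiv ℝ f τ Complex.I))

/-- Ramanujan's series `V_{2n}(q)`: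
numerator `∑_{j∈ℤ} (−1)^j (6j+1)^{2n} q^{j(3j+1)/2}` divided by
denominator `∑_{j∈ℤ} (−1)^j q^{j(3j+1)/2}`. -/
def Vram (n : ℕ) (q : ℂ) : ℂ :=
  (∑' j : ℤ, (-1 : ℂ) ^ j * ((6 * j + 1 : ℤ) : ℂ) ^ (2 * n) * q ^ (j * (3 * j + 1) / 2)) /
    (∑' j : ℤ, (-1 : ℂ) ^ j * q ^ (j * (3 * j + 1) / 2))

/-- The completion
`V̂_{2n}(τ) = ∑_{0≤j≤n} (−1)^{n+j} 3^j π^{2n−j} V_{2n−2j}(q) / ((2v)^j j! (2n−2j)!)`. -/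
def Vhat (n : ℕ) (τ : ℂ) : ℂ :=
  ∑ j ∈ Finset.range (n + 1),
    (-1 : ℂ) ^ (n + j) * 3 ^ j * (π : ℂ) ^ (2 * n - j) * Vram (n - j) (qq τ) /
      ((2 * (τ.im : ℂ)) ^ j * (Nat.factorial j : ℂ) * (Nat.factorial (2 * n - 2 * j) : ℂ))

/-! ### Summability and holomorphy of the theta-like sums -/

theorem six_mul_add_one_sq (j : ℤ) : (6 * j + 1) ^ 2 = 24 * (pentagonal (-j) : ℤ) + 1 := by
  linear_combination -12 * two_mul_natCast_pentagonal_neg j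

theorem zpow_pentagonal (q : ℂ) (j : ℤ) : q ^ (j * (3 * j + 1) / 2) = q ^ pentagonal (-j) := by
  have h : j * (3 * j + 1) / 2 = (pentagonal (-j) : ℤ) := by
    have := two_mul_natCast_pentagonal_neg j
    omega
  rw [h, zpow_natCast]

/-- Since `(6j+1)² = 24p + 1` for the pentagonal number `p = j(3j+1)/2`, and distinct `j` have
distinct `p`, the numerator series is dominated by a subseries of `∑ₚ (24p+1)ⁿ rᵖ`. -/
theorem summable_majorant (n : ℕ) {r : ℝ} (h0 : 0 ≤ r) (h1 : r < 1) :
    Summable fun j : ℤ => (24 * (pentagonal (-j) : ℝ) + 1) ^ n * r ^ pentagonal (-j) := by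
  have h : Summable fun p : ℕ => (24 * (p : ℝ) + 1) ^ n * r ^ p := by
    have hg := summable_geometric_of_lt_one h0 h1
    have hp := (summable_pow_mul_geometric_of_norm_lt_one (R := ℝ) n
      (r := r) (by rwa [Real.norm_of_nonneg h0])).mul_left (25 ^ n)
    refine (hp.add hg).of_nonneg_of_le (fun p => by positivity) fun p => ?_
    have hr : 0 ≤ r ^ p := by positivity
    rcases Nat.eq_zero_or_pos p with rfl | hp
    · simp
    · have hp1 : (1 : ℝ) ≤ p := by exact_mod_cast hp
      have : (24 * (p : ℝ) + 1) ^ n ≤ (25 * p) ^ n :=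
        pow_le_pow_left₀ (by positivity) (by linarith) n
      rw [mul_pow] at this
      nlinarith [mul_le_mul_of_nonneg_right this hr]
  exact h.comp_injective (pentagonal_injective.comp neg_injective)

theorem norm_numerator_term (n : ℕ) (q : ℂ) (j : ℤ) :
    ‖(-1 : ℂ) ^ j * ((6 * j + 1 : ℤ) : ℂ) ^ (2 * n) * q ^ (j * (3 * j + 1) / 2)‖ =
      (24 * (pentagonal (-j) : ℝ) + 1) ^ n * ‖q‖ ^ pentagonal (-j) := by
  have h : ((6 * j + 1 : ℤ) : ℂ) ^ (2 * n) = (((24 * (pentagonal (-j) : ℝ) + 1) : ℝ) : ℂ) ^ n := by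
    rw [pow_mul]
    congr 1
    exact_mod_cast six_mul_add_one_sq j
  rw [h, zpow_pentagonal, norm_mul, norm_mul, norm_zpow, norm_neg, norm_one, one_zpow, one_mul,
    norm_pow, norm_pow, Complex.norm_of_nonneg (by positivity)]

theorem differentiableAt_numerator (n : ℕ) {q : ℂ} (hq : ‖q‖ < 1) :
    DifferentiableAt ℂ (fun q : ℂ => ∑' j : ℤ, (-1 : ℂ) ^ j * ((6 * j + 1 : ℤ) : ℂ) ^ (2 * n) *
      q ^ (j * (3 * j + 1) / 2)) q := by
  obtain ⟨r, hr, hr1⟩ := exists_between hq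
  have h0 : 0 ≤ r := (norm_nonneg q).trans hr.le
  refine (Complex.differentiableOn_tsum_of_summable_norm (U := Metric.ball 0 r)
    (summable_majorant n h0 hr1) (fun j => ?_) Metric.isOpen_ball fun j w hw => ?_).differentiableAt
    (Metric.isOpen_ball.mem_nhds (by simpa using hr))
  · simp_rw [zpow_pentagonal]
    fun_prop
  · rw [norm_numerator_term]
    have : ‖w‖ ≤ r := by simpa using (Metric.mem_ball.mp hw).le
    gcongr

/-! ### The pentagonal number theorem in the unit disc -/

/-- The partial products in Euler's proof are bounded uniformly in the shift `k` and the
length `n`. -/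
theorem norm_euler_prod_le {q : ℂ} (hq : ‖q‖ < 1) (k n : ℕ) :
    ‖∏ i ∈ Finset.range n, (1 - q ^ (k + i + 1))‖ ≤ Real.exp (1 - ‖q‖)⁻¹ := by
  rw [norm_prod]
  calc ∏ i ∈ Finset.range n, ‖1 - q ^ (k + i + 1)‖
      ≤ ∏ i ∈ Finset.range n, Real.exp (‖q‖ ^ i) := by
        refine Finset.prod_le_prod (fun _ _ => norm_nonneg _) fun i _ => ?_
        calc ‖1 - q ^ (k + i + 1)‖ ≤ 1 + ‖q‖ ^ (k + i + 1) := by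
              simpa using norm_sub_le (1 : ℂ) (q ^ (k + i + 1))
          _ ≤ ‖q‖ ^ i + 1 := by
              rw [add_comm]
              gcongr ?_ + 1
              exact pow_le_pow_of_le_one (norm_nonneg _) hq.le (by omega)
          _ ≤ _ := Real.add_one_le_exp _
    _ = Real.exp (∑ i ∈ Finset.range n, ‖q‖ ^ i) := (Real.exp_sum _ _).symm
    _ ≤ Real.exp (1 - ‖q‖)⁻¹ := by
        rw [Real.exp_le_exp, ← tsum_geometric_of_lt_one (norm_nonneg _) hq]
        exact (summable_geometric_of_lt_one (norm_nonneg _) hq).sum_le_tsum _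
          fun _ _ => by positivity

theorem norm_euler_term_le {q : ℂ} (hq : ‖q‖ < 1) (k n : ℕ) :
    ‖q ^ ((k + 1) * n) * ∏ i ∈ Finset.range (n + 1), (1 - q ^ (k + i + 1))‖ ≤
      ‖q‖ ^ n * Real.exp (1 - ‖q‖)⁻¹ := by
  rw [norm_mul, norm_pow]
  exact mul_le_mul (pow_le_pow_of_le_one (norm_nonneg _) hq.le (by nlinarith))
    (norm_euler_prod_le hq k (n + 1)) (norm_nonneg _) (by positivity)

/-- Euler's pentagonal number theorem for complex `q` in the open unit disc. -/
theorem tsum_pentagonal_eq_tprod {q : ℂ} (hq : ‖q‖ < 1) :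
    ∑' j : ℤ, (-1 : ℂ) ^ j * q ^ (j * (3 * j + 1) / 2) = ∏' n : ℕ, (1 - q ^ (n + 1)) := by
  have hgeo := summable_geometric_of_lt_one (norm_nonneg q) hq
  have hS : Summable fun j : ℤ => (-1 : ℂ) ^ j * q ^ (j * (3 * j + 1) / 2) := by
    refine Summable.of_norm ((summable_majorant 0 (norm_nonneg q) hq).congr fun j => ?_)
    rw [← norm_numerator_term]
    simp
  have hN : HasSum (fun k : ℕ => (-1 : ℂ) ^ k * (q ^ pentagonal (-k) - q ^ pentagonal (k + 1)))
      (∑' j : ℤ, (-1 : ℂ) ^ j * q ^ (j * (3 * j + 1) / 2)) := by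
    convert hS.hasSum.nat_add_neg_add_one using 2 with k
    have hs : (-1 : ℂ) ^ (-((k : ℤ) + 1)) = -(-1) ^ k := by
      rw [zpow_neg, zpow_add₀ (by norm_num), zpow_natCast, zpow_one]
      rcases neg_one_pow_eq_or ℂ k with h | h <;> norm_num [h]
    rw [zpow_pentagonal, zpow_pentagonal, neg_neg, hs, zpow_natCast]
    ring
  rw [Pentagonal.tprod_one_sub_pow (x := q) ?_ ?_ ?_ hN.summable ?_, hN.tsum_eq]
  · exact tendsto_pow_atTop_nhds_zero_of_norm_lt_one hq
  · exact fun k => (hgeo.mul_right _).of_norm_bounded (norm_euler_term_le hq k)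
  · intro k
    simp_rw [sub_eq_add_neg]
    refine multipliable_one_add_of_summable ?_
    simpa [add_assoc] using (summable_nat_add_iff (k + 1)).mpr hgeo
  · have hlim : Tendsto (fun k : ℕ => ‖q‖ ^ k * ((1 - ‖q‖)⁻¹ * Real.exp (1 - ‖q‖)⁻¹))
        atTop (nhds 0) := by
      simpa using (tendsto_pow_atTop_nhds_zero_of_lt_one (norm_nonneg q) hq).mul_const
        ((1 - ‖q‖)⁻¹ * Real.exp (1 - ‖q‖)⁻¹)
    refine squeeze_zero_norm (fun k => ?_) hlim
    rw [norm_mul, norm_mul, norm_pow, norm_neg, norm_one, one_pow, one_mul, norm_pow]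
    refine mul_le_mul (pow_le_pow_of_le_one (norm_nonneg _) hq.le ?_) ?_ (norm_nonneg _)
      (by positivity)
    · rw [Nat.le_div_iff_mul_le (by norm_num)]
      nlinarith
    · exact tsum_of_norm_bounded ((hasSum_geometric_of_lt_one (norm_nonneg q) hq).mul_right _)
        (norm_euler_term_le hq k)

theorem tsum_pentagonal_ne_zero {q : ℂ} (hq : ‖q‖ < 1) :
    ∑' j : ℤ, (-1 : ℂ) ^ j * q ^ (j * (3 * j + 1) / 2) ≠ 0 := by
  rw [tsum_pentagonal_eq_tprod hq]
  simp_rw [sub_eq_add_neg]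
  refine tprod_one_add_ne_zero_of_summable (fun n h => ?_) ?_
  · have h1 : q ^ (n + 1) = 1 := by linear_combination -h
    have h2 : ‖q‖ ^ (n + 1) < 1 := pow_lt_one₀ (norm_nonneg _) hq (by omega)
    rw [← norm_pow, h1, norm_one] at h2
    exact lt_irrefl _ h2
  · simpa using (summable_nat_add_iff 1).mpr (summable_geometric_of_lt_one (norm_nonneg q) hq)

/-! ### The lowering operator -/

theorem norm_qq_lt_one {τ : ℂ} (hτ : 0 < τ.im) : ‖qq τ‖ < 1 := by
  simpa [qq] using UpperHalfPlane.norm_exp_two_pi_I_lt_one ⟨τ, hτ⟩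

theorem differentiableAt_Vram_qq (n : ℕ) {τ : ℂ} (hτ : 0 < τ.im) :
    DifferentiableAt ℂ (fun τ => Vram n (qq τ)) τ := by
  have hq := norm_qq_lt_one hτ
  have hD : DifferentiableAt ℂ
      (fun q : ℂ => ∑' j : ℤ, (-1 : ℂ) ^ j * q ^ (j * (3 * j + 1) / 2)) (qq τ) := by
    simpa using differentiableAt_numerator 0 hq
  have hV : DifferentiableAt ℂ (Vram n) (qq τ) :=
    (differentiableAt_numerator n hq).fun_div hD (tsum_pentagonal_ne_zero hq)
  have hqq : DifferentiableAt ℂ qq τ := by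
    unfold qq
    fun_prop
  exact hV.comp τ hqq

/-- `f` is real-differentiable at `τ` and `L f (τ) = a`. -/
def HasLower (f : ℂ → ℂ) (a τ : ℂ) : Prop := DifferentiableAt ℝ f τ ∧ lowerOp f τ = a

theorem HasLower.sum {ι : Type*} (s : Finset ι) {f : ι → ℂ → ℂ} {a : ι → ℂ} {τ : ℂ}
    (h : ∀ i ∈ s, HasLower (f i) (a i) τ) :
    HasLower (fun τ => ∑ i ∈ s, f i τ) (∑ i ∈ s, a i) τ := by
  refine ⟨DifferentiableAt.fun_sum fun i hi => (h i hi).1, ?_⟩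
  rw [Finset.sum_congr rfl fun i hi => (h i hi).2.symm]
  unfold lowerOp
  rw [fderiv_fun_sum fun i hi => (h i hi).1]
  simp only [sum_apply, Finset.mul_sum, ← Finset.sum_add_distrib]

/-- Holomorphic factors are annihilated by `∂/∂τ̄`, and on functions of `v` alone the operator `L`
acts as `v² d/dv`. -/
theorem hasLower_mul_zpow {h : ℂ → ℂ} {τ : ℂ} (hh : DifferentiableAt ℂ h τ) (hτ : 0 < τ.im)
    (m : ℤ) :
    HasLower (fun τ => h τ * (τ.im : ℂ) ^ m) (h τ * (m * (τ.im : ℂ) ^ (m + 1))) τ := by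
  have hv : (τ.im : ℂ) ≠ 0 := by exact_mod_cast hτ.ne'
  have h1 : HasFDerivAt h _ τ := hh.hasDerivAt.hasFDerivAt.restrictScalars ℝ
  have h2 : HasFDerivAt (fun z : ℂ => (z.im : ℂ)) (Complex.ofRealCLM.comp Complex.imCLM) τ :=
    (Complex.ofRealCLM.comp Complex.imCLM).hasFDerivAt
  have h3 := ((hasDerivAt_zpow m (τ.im : ℂ) (Or.inl hv)).hasFDerivAt.restrictScalars ℝ)
  have h4 := h1.mul (h3.comp τ h2)
  have e : (fun τ : ℂ => h τ * (τ.im : ℂ) ^ m) =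
      h * ((fun z : ℂ => z ^ m) ∘ fun z : ℂ => (z.im : ℂ)) := rfl
  refine ⟨h4.differentiableAt, ?_⟩
  rw [e, lowerOp, h4.fderiv]
  simp [zpow_add₀ hv, zpow_sub₀ hv]
  field_simp
  linear_combination (-h τ * (m : ℂ) - Complex.I * (τ.im : ℂ) * deriv h τ) * Complex.I_sq

/-- `V̂₀(τ) = 1` for all `τ ∈ ℍ`, and for every `n ≥ 1` the lowering
operator satisfies `L(V̂_{2n}) = −(3π/2)·V̂_{2n−2}` on ℍ. -/
theorem Vhat_lowering :
    (∀ τ : ℂ, 0 < τ.im → Vhat 0 τ = 1) ∧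
    (∀ n : ℕ, 1 ≤ n → ∀ τ : ℂ, 0 < τ.im →
      lowerOp (Vhat n) τ = -(3 * (π : ℂ) / 2) * Vhat (n - 1) τ) := by
  constructor
  · intro τ hτ
    have := tsum_pentagonal_ne_zero (norm_qq_lt_one hτ)
    simp [Vhat, Vram, this]
  · rintro n hn τ hτ
    obtain ⟨m, rfl⟩ : ∃ m, n = m + 1 := ⟨n - 1, by omega⟩
    have hv : (τ.im : ℂ) ≠ 0 := by exact_mod_cast hτ.ne'
    let c : ℕ → ℂ := fun j => (-1 : ℂ) ^ (m + 1 + j) * 3 ^ j * (π : ℂ) ^ (2 * (m + 1) - j) /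
      (2 ^ j * (Nat.factorial j : ℂ) * (Nat.factorial (2 * (m + 1) - 2 * j) : ℂ))
    have hV : Vhat (m + 1) = fun τ => ∑ j ∈ Finset.range (m + 1 + 1),
        c j * Vram (m + 1 - j) (qq τ) * (τ.im : ℂ) ^ (-(j : ℤ)) := by
      funext z
      refine Finset.sum_congr rfl fun j _ => ?_
      simp only [c, zpow_neg, zpow_natCast, mul_pow, div_eq_mul_inv, mul_inv]
      ring
    have hL := (HasLower.sum (Finset.range (m + 1 + 1)) fun j _ =>
      hasLower_mul_zpow ((differentiableAt_Vram_qq (m + 1 - j) hτ).const_mul (c j)) hτ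
        (-(j : ℤ))).2
    rw [hV, hL, Finset.sum_range_succ', Vhat, Finset.mul_sum]
    simp only [Nat.cast_zero, neg_zero, Int.cast_zero, zero_mul, mul_zero, add_zero,
      Nat.add_sub_cancel]
    refine Finset.sum_congr rfl fun k hk => ?_
    have hk : k ≤ m := by simpa [Nat.lt_succ_iff] using hk
    have e1 : 2 * (m + 1) - (k + 1) = 2 * m - k + 1 := by omega
    have e2 : 2 * (m + 1) - 2 * (k + 1) = 2 * m - 2 * k := by omega
    have e3 : m + 1 - (k + 1) = m - k := by omega
    have e4 : -((k + 1 : ℕ) : ℤ) + 1 = -(k : ℤ) := by push_cast; ring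
    have hf : (Nat.factorial k : ℂ) ≠ 0 := by exact_mod_cast Nat.factorial_ne_zero k
    have hf2 : (Nat.factorial (2 * m - 2 * k) : ℂ) ≠ 0 := by
      exact_mod_cast Nat.factorial_ne_zero _
    have hk1 : (k : ℂ) + 1 ≠ 0 := by exact_mod_cast Nat.succ_ne_zero k
    simp only [c, e1, e2, e3, e4, zpow_neg, zpow_natCast, Nat.factorial_succ]
    push_cast
    field_simp
    ring
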